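/- Let Ω ⊆ ℝ^m be open and let f = (f^{x_1}, f^{y_1}, …, f^{x_n}, f^{y_n}, f^t) : Ω → ℝ^{2n+1} be a map of class C^{0,1/2+}_loc into ℍ^n: for every compact K ⊆ Ω, sup{ d_K(f(p), f(q))/|p−q|^{1/2} : p, q ∈ K, 0 < |p−q| ≤ s } → 0 as s → 0+. If all the components f^{x_j}, f^{y_j} (j = 1, …, n) are differentiable at a point p_0 ∈ Ω, then the last component f^t is also differentiable at p_0 and its derivative satisfies Df^t(p_0) = 2·∑_{j=1}^n ( f^{y_j}(p_0)·Df^{x_j}(p_0) − f^{x_j}(p_0)·Df^{y_j}(p_0) ) as linear maps ℝ^m → ℝ. -/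

import Mathlib

open Metric Set MeasureTheory Topology

/-- The index of the coordinate `x_j` in `ℝ^{2n+1}`. -/
def xI (n : ℕ) (j : Fin n) : Fin (2*n+1) := ⟨2*j.1, by have := j.2; omega⟩

/-- The index of the coordinate `y_j` in `ℝ^{2n+1}`. -/
def yI (n : ℕ) (j : Fin n) : Fin (2*n+1) := ⟨2*j.1+1, by have := j.2; omega⟩

/-- The index of the coordinate `t` in `ℝ^{2n+1}`. -/
def tI (n : ℕ) : Fin (2*n+1) := Fin.last (2*n)

/-- The Korányi metric on the Heisenberg group `ℍ^n = ℝ^{2n+1}`: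
`d_K(p,q) = (|z-z'|^4 + |t - t' + 2 ∑_j (x_j' y_j - x_j y_j')|^2)^{1/4}`. -/
noncomputable def dK (n : ℕ) (p q : EuclideanSpace ℝ (Fin (2*n+1))) : ℝ :=
  ((∑ i : Fin (2*n), (p (Fin.castSucc i) - q (Fin.castSucc i)) ^ 2) ^ 2 +
    (p (tI n) - q (tI n) +
      2 * ∑ j : Fin n, (q (xI n j) * p (yI n j) - p (xI n j) * q (yI n j))) ^ 2) ^ ((1:ℝ)/4)

/-!
The vertical coordinate of `q⁻¹ * p` is at most `d_K(p, q)^2` in absolute value, so if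
`d_K(f(p), f(p₀))` is `o(|p - p₀|^{1/2})`, then the vertical coordinate of `f(p₀)⁻¹ * f(p)` is
`o(|p - p₀|)`, that is, it has derivative zero at `p₀`. Since `f(p₀)` is fixed, this coordinate is
`f^t(p)` plus an affine function of the horizontal components of `f(p)`, and solving for `f^t`
gives both its differentiability and its derivative.
-/

open Asymptotics

/-- The class `C^{0,α+}_loc` on `Ω` of maps into `Y` with distance function `d`. The distance is
an explicit argument because `dK` is not the metric carried by `EuclideanSpace`. -/
def IsLocLittleHolderOn {X Y : Type*} [PseudoMetricSpace X] (d : Y → Y → ℝ) (α : ℝ) (f : X → Y)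
    (Ω : Set X) : Prop :=
  ∀ K ⊆ Ω, IsCompact K → ∀ δ : ℝ, 0 < δ → ∃ s : ℝ, 0 < s ∧
    ∀ p ∈ K, ∀ q ∈ K, dist p q ≤ s → d (f p) (f q) ≤ δ * dist p q ^ α

theorem IsLocLittleHolderOn.isLittleO {X Y : Type*} [PseudoMetricSpace X] [LocallyCompactSpace X]
    {d : Y → Y → ℝ} {α : ℝ} {f : X → Y} {Ω : Set X} {p₀ : X}
    (hf : IsLocLittleHolderOn d α f Ω) (hd : ∀ a b, 0 ≤ d a b) (hΩ : Ω ∈ 𝓝 p₀) :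
    (fun p => d (f p) (f p₀)) =o[𝓝 p₀] fun p => dist p p₀ ^ α := by
  obtain ⟨K, hK, hKΩ, hKc⟩ := local_compact_nhds hΩ
  refine isLittleO_iff.2 fun δ hδ => ?_
  obtain ⟨s, hs, hfs⟩ := hf K hKΩ hKc δ hδ
  filter_upwards [hK, closedBall_mem_nhds p₀ hs] with p hpK hps
  rw [Real.norm_of_nonneg (hd _ _), Real.norm_of_nonneg (Real.rpow_nonneg dist_nonneg α)]
  exact hfs p hpK p₀ (mem_of_mem_nhds hK) hps

section Koranyi

variable {n : ℕ}

/-- The `t`-coordinate of `q⁻¹ * p` in the Heisenberg group, for the group law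
`(z, t) * (z', t') = (z + z', t + t' + 2 ∑_j (y_j x_j' - x_j y_j'))`; it is the vertical term of
`dK`. -/
def verticalDisplacement (p q : EuclideanSpace ℝ (Fin (2 * n + 1))) : ℝ :=
  p (tI n) - q (tI n) +
    2 * ∑ j : Fin n, (q (xI n j) * p (yI n j) - p (xI n j) * q (yI n j))

theorem verticalDisplacement_self (p : EuclideanSpace ℝ (Fin (2 * n + 1))) :
    verticalDisplacement p p = 0 := by
  simp [verticalDisplacement]

theorem apply_tI_eq_verticalDisplacement_add (p q : EuclideanSpace ℝ (Fin (2 * n + 1))) :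
    p (tI n) = verticalDisplacement p q +
      2 * ∑ j : Fin n, (p (xI n j) * q (yI n j) - q (xI n j) * p (yI n j)) + q (tI n) := by
  simp only [verticalDisplacement, Finset.sum_sub_distrib]
  ring

theorem dK_nonneg (p q : EuclideanSpace ℝ (Fin (2 * n + 1))) : 0 ≤ dK n p q :=
  Real.rpow_nonneg (by positivity) _

theorem dK_sq (p q : EuclideanSpace ℝ (Fin (2 * n + 1))) :
    dK n p q ^ 2 = √((∑ i : Fin (2 * n), (p (Fin.castSucc i) - q (Fin.castSucc i)) ^ 2) ^ 2 +
      verticalDisplacement p q ^ 2) := by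
  rw [Real.sqrt_eq_rpow, dK, ← Real.rpow_mul_natCast (by positivity), verticalDisplacement]
  norm_num

theorem abs_verticalDisplacement_le_dK_sq (p q : EuclideanSpace ℝ (Fin (2 * n + 1))) :
    |verticalDisplacement p q| ≤ dK n p q ^ 2 := by
  rw [dK_sq]
  exact Real.abs_le_sqrt (le_add_of_nonneg_left (sq_nonneg _))

theorem isLittleO_verticalDisplacement {ι : Type*} {l : Filter ι}
    {f g : ι → EuclideanSpace ℝ (Fin (2 * n + 1))} {ρ : ι → ℝ} (hρ : ∀ i, 0 ≤ ρ i)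
    (h : (fun i => dK n (f i) (g i)) =o[l] fun i => ρ i ^ ((1 : ℝ) / 2)) :
    (fun i => verticalDisplacement (f i) (g i)) =o[l] ρ := by
  have hsq : (fun i => dK n (f i) (g i) ^ 2) =o[l] ρ :=
    (h.pow two_pos).congr_right fun i => by rw [← Real.sqrt_eq_rpow, Real.sq_sqrt (hρ i)]
  refine IsBigO.trans_isLittleO (.of_norm_le fun i => ?_) hsq
  exact abs_verticalDisplacement_le_dK_sq _ _

variable {E : Type*} [NormedAddCommGroup E] [NormedSpace ℝ E]
  {f : E → EuclideanSpace ℝ (Fin (2 * n + 1))} {p₀ : E}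

theorem hasFDerivAt_verticalDisplacement_zero
    (hf : (fun p => dK n (f p) (f p₀)) =o[𝓝 p₀] fun p => dist p p₀ ^ ((1 : ℝ) / 2)) :
    HasFDerivAt (fun p => verticalDisplacement (f p) (f p₀)) (0 : E →L[ℝ] ℝ) p₀ := by
  have hvert : (fun p => verticalDisplacement (f p) (f p₀)) =o[𝓝 p₀] fun p => p - p₀ := by
    simpa only [dist_eq_norm, isLittleO_norm_right] using
      isLittleO_verticalDisplacement (fun _ => dist_nonneg) hf
  refine .of_isLittleO (hvert.congr_left fun p => ?_)
  rw [verticalDisplacement_self, sub_zero, zero_apply, sub_zero]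

theorem stmt15_general {X' Y' : Fin n → E →L[ℝ] ℝ}
    (hf : (fun p => dK n (f p) (f p₀)) =o[𝓝 p₀] fun p => dist p p₀ ^ ((1 : ℝ) / 2))
    (hx : ∀ j, HasFDerivAt (fun p => f p (xI n j)) (X' j) p₀)
    (hy : ∀ j, HasFDerivAt (fun p => f p (yI n j)) (Y' j) p₀) :
    HasFDerivAt (fun p => f p (tI n))
      ((2 : ℝ) • ∑ j, (f p₀ (yI n j) • X' j - f p₀ (xI n j) • Y' j)) p₀ := by
  have hhoriz : HasFDerivAt
      (fun p => 2 * ∑ j, (f p (xI n j) * f p₀ (yI n j) - f p₀ (xI n j) * f p (yI n j)))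
      ((2 : ℝ) • ∑ j, (f p₀ (yI n j) • X' j - f p₀ (xI n j) • Y' j)) p₀ :=
    (HasFDerivAt.fun_sum fun j _ =>
      ((hx j).mul_const _).sub ((hy j).const_mul _)).const_mul 2
  have ht := ((hasFDerivAt_verticalDisplacement_zero hf).fun_add hhoriz).add_const (f p₀ (tI n))
  simpa only [← apply_tI_eq_verticalDisplacement_add, zero_add] using ht

end Koranyi

/-- Proposition 7.7 of the paper. If `f : Ω → ℍ^n` is of class
`C^{0,1/2+}_loc` and the first `2n` components are differentiable at `p₀ ∈ Ω`, then so is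
the last component, with
`Df^t(p₀) = 2 ∑_j (f^{y_j}(p₀) Df^{x_j}(p₀) - f^{x_j}(p₀) Df^{y_j}(p₀))`. -/
theorem stmt15 (m n : ℕ) (Ω : Set (EuclideanSpace ℝ (Fin m))) (hΩ : IsOpen Ω)
    (f : EuclideanSpace ℝ (Fin m) → EuclideanSpace ℝ (Fin (2*n+1)))
    (hf : ∀ K : Set (EuclideanSpace ℝ (Fin m)), K ⊆ Ω → IsCompact K →
      ∀ δ : ℝ, 0 < δ → ∃ s : ℝ, 0 < s ∧ ∀ p ∈ K, ∀ q ∈ K, dist p q ≤ s →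
        dK n (f p) (f q) ≤ δ * dist p q ^ ((1:ℝ)/2))
    (p₀ : EuclideanSpace ℝ (Fin m)) (hp₀ : p₀ ∈ Ω)
    (hdiff : ∀ j : Fin n,
      DifferentiableAt ℝ (fun p => f p (xI n j)) p₀ ∧
      DifferentiableAt ℝ (fun p => f p (yI n j)) p₀) :
    DifferentiableAt ℝ (fun p => f p (tI n)) p₀ ∧
    fderiv ℝ (fun p => f p (tI n)) p₀ =
      (2:ℝ) • ∑ j : Fin n,
        (f p₀ (yI n j) • fderiv ℝ (fun p => f p (xI n j)) p₀ -
         f p₀ (xI n j) • fderiv ℝ (fun p => f p (yI n j)) p₀) := by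
  have ht := stmt15_general (IsLocLittleHolderOn.isLittleO hf dK_nonneg (hΩ.mem_nhds hp₀))
    (fun j => (hdiff j).1.hasFDerivAt) fun j => (hdiff j).2.hasFDerivAt
  exact ⟨ht.differentiableAt, ht.fderiv⟩
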